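/- Let λ = (λ_1,…,λ_r) be a composition of n, let t ∈ {0,1,…,r}, and set δ_t = n − 2 Σ_{j≤t} λ_j. If δ_t ≠ 0, then inserting the part |δ_t| after position t preserves the number of orbits: γ(T_{(λ_1,…,λ_t, |δ_t|, λ_{t+1},…,λ_r)}) = γ(T_λ). In particular, the (t+1)-th translation parameter of the composition (λ_1,…,λ_t, |δ_t|, λ_{t+1},…,λ_r) equals δ_t. -/

import Mathlib

/-!
Write `l = p ++ q` with `p` the first `t` parts, let `a` and `b` be the sums of `p` and `q`, so that
`δ_t = b - a`, and put `d = |b - a|`. The exchange `T'` of `p ++ d :: q` translates the inserted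
block `M`, of length `d`, by `b - a = ± d`, hence off itself. Once the gap `M` is closed, the first
return map of `T'` to the complement of `M` is the exchange `T` of `l`: a point of `p` is sent by
`T'` to `d` more than by `T`, a point of `q` to the same place, which is what `T` prescribes unless
`T'` lands in `M`; and then the translation of `M` by `b - a` leads to the right point. Since `T'`
permutes a finite set and none of its orbits stays inside `M`, each of them meets the complement of
`M` in exactly one orbit of the return map.
-/

/-- A composition: a nonempty list of positive integers. -/
def IsComposition (l : List ℕ) : Prop := l ≠ [] ∧ ∀ x ∈ l, 0 < x

/-- The `i`-th translation parameter (0-indexed):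
`s_i = (sum of parts after position i) - (sum of parts before position i)`. -/
def transParam (l : List ℕ) (i : ℕ) : ℤ :=
  ((l.drop (i + 1)).sum : ℤ) - ((l.take i).sum : ℤ)

/-- The symmetric discrete interval exchange associated to `l`, as a map `ℤ → ℤ`
(acting on `{1, …, n}`, identity elsewhere): `x ∈ B_i` is sent to `x + s_i`. -/
def Texch (l : List ℕ) (x : ℤ) : ℤ :=
  x + ∑ i ∈ Finset.range l.length,
    (if ((l.take i).sum : ℤ) < x ∧ x ≤ ((l.take (i + 1)).sum : ℤ) then transParam l i else 0)

/-- The orbit of `x` under `T_l`. -/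
def orbit (l : List ℕ) (x : ℤ) : Set ℤ := {y | ∃ k : ℕ, (Texch l)^[k] x = y}

/-- The set of orbits of `T_l` on `{1, …, n}`. -/
def orbitsSet (l : List ℕ) : Set (Set ℤ) :=
  {S | ∃ x : ℤ, 1 ≤ x ∧ x ≤ (l.sum : ℤ) ∧ S = orbit l x}

/-- The number of orbits `γ(T_l)` of `T_l` on `{1, …, n}`. -/
noncomputable def numOrbits (l : List ℕ) : ℕ := (orbitsSet l).ncard

/-- `δ_t = n - 2·(λ_1 + … + λ_t)` for a composition of `n`, with `t ∈ {0,…,r}`. -/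
def deltaParam (l : List ℕ) (t : ℕ) : ℤ := (l.sum : ℤ) - 2 * ((l.take t).sum : ℤ)

open Function Set

section FirstReturn

variable {α β : Type*}

/-- The forward orbit of `x` under an arbitrary self-map `f`, of which `orbit l` is the case
`f = Texch l`. -/
def forwardOrbit (f : α → α) (x : α) : Set α := {y | ∃ k : ℕ, f^[k] x = y}

lemma self_mem_forwardOrbit (f : α → α) (x : α) : x ∈ forwardOrbit f x := ⟨0, rfl⟩

lemma forwardOrbit_subset_of_mem {f : α → α} {x y : α} (hy : y ∈ forwardOrbit f x) :
    forwardOrbit f y ⊆ forwardOrbit f x := by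
  obtain ⟨k, rfl⟩ := hy
  rintro _ ⟨j, rfl⟩
  exact ⟨j + k, iterate_add_apply f j k x⟩

lemma mem_forwardOrbit_of_mem_periodicPts {f : α → α} {x y : α} (hx : x ∈ periodicPts f)
    (hy : y ∈ forwardOrbit f x) : x ∈ forwardOrbit f y := by
  obtain ⟨k, rfl⟩ := hy
  obtain ⟨n, hn, hper⟩ := mem_periodicPts.1 hx
  refine ⟨n * k - k, ?_⟩
  rw [← iterate_add_apply, Nat.sub_add_cancel (Nat.le_mul_of_pos_left k hn)]
  exact hper.mul_const k

lemma forwardOrbit_eq_of_mem_periodicPts {f : α → α} {x y : α} (hx : x ∈ periodicPts f)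
    (hy : y ∈ forwardOrbit f x) : forwardOrbit f y = forwardOrbit f x :=
  (forwardOrbit_subset_of_mem hy).antisymm
    (forwardOrbit_subset_of_mem (mem_forwardOrbit_of_mem_periodicPts hx hy))

lemma subset_periodicPts_of_injOn {f : α → α} {s : Set α} (hs : s.Finite) (hmaps : MapsTo f s s)
    (hinj : InjOn f s) : s ⊆ periodicPts f := by
  intro x hx
  have := hs.to_subtype
  have hval : Semiconj Subtype.val (hmaps.restrict f s s) f := fun _ => rfl
  exact hval.mapsTo_periodicPts
    ((hmaps.restrict_inj.2 hinj).mem_periodicPts (⟨x, hx⟩ : s))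

/-- `f` is the first return map of `g` to `range φ`, the points of `range φ` being labelled by
`φ`. The iterate `k + 1` is the return time. -/
def IsFirstReturnMap (g : β → β) (φ : α → β) (f : α → α) : Prop :=
  ∀ x, ∃ k : ℕ, g^[k + 1] (φ x) = φ (f x) ∧ ∀ j < k, g^[j + 1] (φ x) ∉ range φ

namespace IsFirstReturnMap

variable {f : α → α} {g : β → β} {φ : α → β}

lemma of_return_time_le_two
    (h : ∀ x, g (φ x) = φ (f x) ∨ g (φ x) ∉ range φ ∧ g (g (φ x)) = φ (f x)) :
    IsFirstReturnMap g φ f := by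
  intro x
  rcases h x with hone | ⟨hout, htwo⟩
  · exact ⟨0, hone, by simp⟩
  · refine ⟨1, htwo, fun j hj => ?_⟩
    rwa [Nat.lt_one_iff.1 hj]

lemma apply_mem_forwardOrbit (h : IsFirstReturnMap g φ f) {x y : α}
    (hy : y ∈ forwardOrbit f x) : φ y ∈ forwardOrbit g (φ x) := by
  obtain ⟨n, rfl⟩ := hy
  induction n generalizing x with
  | zero => exact self_mem_forwardOrbit g (φ x)
  | succ n ih =>
    obtain ⟨k, hk, -⟩ := h x
    exact forwardOrbit_subset_of_mem ⟨k + 1, hk⟩ ih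

lemma mem_forwardOrbit_of_apply_mem (h : IsFirstReturnMap g φ f) (hφ : Injective φ) {x y : α}
    (hy : φ y ∈ forwardOrbit g (φ x)) : y ∈ forwardOrbit f x := by
  obtain ⟨n, hn⟩ := hy
  induction n using Nat.strong_induction_on generalizing x with
  | _ n ih =>
    rcases n with - | n
    · exact ⟨0, hφ hn⟩
    · obtain ⟨k, hk, hout⟩ := h x
      have hkn : k ≤ n := not_lt.1 fun hnk => hout n hnk ⟨y, hn.symm⟩
      have hrest : g^[n - k] (φ (f x)) = φ y := by
        have hsplit : n + 1 = n - k + (k + 1) := by omega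
        rwa [hsplit, iterate_add_apply, hk] at hn
      exact forwardOrbit_subset_of_mem ⟨1, rfl⟩ (ih (n - k) (by omega) hrest)

lemma preimage_forwardOrbit (h : IsFirstReturnMap g φ f) (hφ : Injective φ) (x : α) :
    φ ⁻¹' forwardOrbit g (φ x) = forwardOrbit f x :=
  Subset.antisymm (fun _ => h.mem_forwardOrbit_of_apply_mem hφ) fun _ => h.apply_mem_forwardOrbit

lemma ncard_image_forwardOrbit_image (h : IsFirstReturnMap g φ f) (hφ : Injective φ) (s : Set α) :
    (forwardOrbit g '' (φ '' s)).ncard = (forwardOrbit f '' s).ncard := by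
  have himage : forwardOrbit f '' s = preimage φ '' (forwardOrbit g '' (φ '' s)) := by
    simp only [image_image, h.preimage_forwardOrbit hφ]
  rw [himage]
  refine (InjOn.ncard_image ?_).symm
  rintro _ ⟨_, ⟨x, -, rfl⟩, rfl⟩ _ ⟨_, ⟨y, -, rfl⟩, rfl⟩ hxy
  have hx : x ∈ φ ⁻¹' forwardOrbit g (φ y) := hxy ▸ self_mem_forwardOrbit g (φ x)
  have hy : y ∈ φ ⁻¹' forwardOrbit g (φ x) := hxy ▸ self_mem_forwardOrbit g (φ y)
  exact (forwardOrbit_subset_of_mem hx).antisymm (forwardOrbit_subset_of_mem hy)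

theorem ncard_image_forwardOrbit (h : IsFirstReturnMap g φ f) (hφ : Injective φ)
    {s : Set α} {t : Set β} (hmaps : MapsTo φ s t) (hper : t ⊆ periodicPts g)
    (hmeet : ∀ x ∈ t, ∃ y ∈ s, φ y ∈ forwardOrbit g x) :
    (forwardOrbit g '' t).ncard = (forwardOrbit f '' s).ncard := by
  rw [← h.ncard_image_forwardOrbit_image hφ s]
  congr 1
  refine Subset.antisymm ?_ (image_mono hmaps.image_subset)
  rintro _ ⟨x, hx, rfl⟩
  obtain ⟨y, hy, hyx⟩ := hmeet x hx
  exact ⟨φ y, mem_image_of_mem φ hy, forwardOrbit_eq_of_mem_periodicPts (hper hx) hyx⟩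

end IsFirstReturnMap

end FirstReturn

section Blocks

/-- The block `B_i` of positions that `Texch l` translates by `transParam l i` (0-indexed; empty
when `i` is at least the number of parts). -/
def block (l : List ℕ) (i : ℕ) : Set ℤ := Ioc ((l.take i).sum : ℤ) ((l.take (i + 1)).sum : ℤ)

lemma monotone_cast_sum_take (l : List ℕ) : Monotone fun i => ((l.take i).sum : ℤ) :=
  Nat.mono_cast.comp (List.monotone_sum_take l)

lemma pairwise_disjoint_block (l : List ℕ) : Pairwise (Disjoint on block l) :=
  (monotone_cast_sum_take l).pairwise_disjoint_on_Ioc_succ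

lemma biUnion_block (l : List ℕ) : ⋃ i ∈ Ico 0 l.length, block l i = Ioc 0 (l.sum : ℤ) := by
  simpa [block] using (monotone_cast_sum_take l).biUnion_Ico_Ioc_map_succ 0 l.length

lemma exists_mem_block {l : List ℕ} {x : ℤ} (hx : x ∈ Ioc 0 (l.sum : ℤ)) :
    ∃ i < l.length, x ∈ block l i := by
  simpa only [← biUnion_block, mem_iUnion₂, mem_Ico, Nat.zero_le, true_and, exists_prop] using hx

lemma block_append_of_lt {p : List ℕ} {i : ℕ} (hi : i < p.length) (q : List ℕ) :
    block (p ++ q) i = block p i := by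
  rw [block, block, List.take_append_of_le_length hi.le, List.take_append_of_le_length hi]

lemma add_mem_block_append (p : List ℕ) {q : List ℕ} {i : ℕ} {x : ℤ} (hx : x ∈ block q i) :
    p.sum + x ∈ block (p ++ q) (p.length + i) := by
  simp only [block, mem_Ioc, add_assoc, List.take_length_add_append, List.sum_append] at hx ⊢
  omega

lemma block_append_cons (p : List ℕ) (d : ℕ) (q : List ℕ) :
    block (p ++ d :: q) p.length = Ioc (p.sum : ℤ) (p.sum + d) := by
  simp [block, List.take_length_add_append, -Nat.cast_list_sum]

lemma transParam_eq_sum_sub (l : List ℕ) (i : ℕ) :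
    transParam l i = l.sum - (l.take i).sum - (l.take (i + 1)).sum := by
  have := l.sum_take_add_sum_drop (i + 1)
  unfold transParam
  omega

lemma transParam_append_of_lt {p : List ℕ} {i : ℕ} (hi : i < p.length) (q : List ℕ) :
    transParam (p ++ q) i = transParam p i + q.sum := by
  simp only [transParam, List.drop_append_of_le_length (show i + 1 ≤ p.length from hi),
    List.take_append_of_le_length hi.le, List.sum_append]
  omega

lemma transParam_append_length_add (p q : List ℕ) (i : ℕ) :
    transParam (p ++ q) (p.length + i) = transParam q i - p.sum := by
  simp only [transParam, add_assoc, List.drop_length_add_append, List.take_length_add_append,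
    List.sum_append]
  omega

lemma transParam_append_cons (p : List ℕ) (d : ℕ) (q : List ℕ) :
    transParam (p ++ d :: q) p.length = q.sum - p.sum := by
  simp [transParam]

end Blocks

section Exchange

lemma texch_of_mem_block {l : List ℕ} {i : ℕ} {x : ℤ} (hi : i < l.length) (hx : x ∈ block l i) :
    Texch l x = x + transParam l i := by
  refine congrArg (x + ·) ((Finset.sum_eq_single_of_mem i (Finset.mem_range.2 hi) ?_).trans ?_)
  · exact fun j _ hji => if_neg fun hxj =>
      disjoint_left.1 (pairwise_disjoint_block l hji) hxj hx
  · exact if_pos hx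

lemma texch_of_notMem_Ioc {l : List ℕ} {x : ℤ} (hx : x ∉ Ioc 0 (l.sum : ℤ)) : Texch l x = x := by
  rw [← biUnion_block] at hx
  unfold Texch
  rw [Finset.sum_eq_zero fun i hi => if_neg fun hxi => hx ?_, add_zero]
  exact mem_biUnion (mem_Ico.2 ⟨i.zero_le, Finset.mem_range.1 hi⟩) hxi

/-- The blocks appear in reverse order in the image. -/
lemma texch_mem_Ioc_of_mem_block {l : List ℕ} {i : ℕ} {x : ℤ} (hi : i < l.length)
    (hx : x ∈ block l i) :
    Texch l x ∈ Ioc ((l.sum : ℤ) - (l.take (i + 1)).sum) (l.sum - (l.take i).sum) := by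
  rw [texch_of_mem_block hi hx, transParam_eq_sum_sub]
  simp only [block, mem_Ioc] at hx ⊢
  omega

lemma mapsTo_texch (l : List ℕ) : MapsTo (Texch l) (Ioc 0 (l.sum : ℤ)) (Ioc 0 (l.sum : ℤ)) := by
  intro x hx
  obtain ⟨i, hi, hxi⟩ := exists_mem_block hx
  have hTx := texch_mem_Ioc_of_mem_block hi hxi
  have := l.sum_take_add_sum_drop (i + 1)
  simp only [mem_Ioc] at hTx ⊢
  omega

lemma injOn_texch (l : List ℕ) : InjOn (Texch l) (Ioc 0 (l.sum : ℤ)) := by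
  intro x hx y hy hxy
  obtain ⟨i, hi, hxi⟩ := exists_mem_block hx
  obtain ⟨j, hj, hyj⟩ := exists_mem_block hy
  have hanti : Antitone fun i => (l.sum : ℤ) - (l.take i).sum :=
    fun _ _ h => sub_le_sub_left (monotone_cast_sum_take l h) _
  have hij : i = j := by
    by_contra hij
    exact disjoint_left.1 (hanti.pairwise_disjoint_on_Ioc_succ hij)
      (texch_mem_Ioc_of_mem_block hi hxi) (hxy ▸ texch_mem_Ioc_of_mem_block hj hyj)
  subst hij
  rwa [texch_of_mem_block hi hxi, texch_of_mem_block hi hyj, add_left_inj] at hxy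

lemma Ioc_subset_periodicPts_texch (l : List ℕ) : Ioc 0 (l.sum : ℤ) ⊆ periodicPts (Texch l) :=
  subset_periodicPts_of_injOn (finite_Ioc _ _) (mapsTo_texch l) (injOn_texch l)

lemma texch_append_left {p : List ℕ} {x : ℤ} (hx : x ∈ Ioc 0 (p.sum : ℤ)) (q : List ℕ) :
    Texch (p ++ q) x = Texch p x + q.sum := by
  obtain ⟨i, hi, hxi⟩ := exists_mem_block hx
  have hxi' : x ∈ block (p ++ q) i := by rwa [block_append_of_lt hi]
  rw [texch_of_mem_block (by rw [List.length_append]; omega) hxi', texch_of_mem_block hi hxi,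
    transParam_append_of_lt hi, add_assoc]

lemma sum_lt_texch_append {p : List ℕ} {x : ℤ} (hx : x ∈ Ioc 0 (p.sum : ℤ)) (q : List ℕ) :
    q.sum < Texch (p ++ q) x := by
  rw [texch_append_left hx]
  exact lt_add_of_pos_left _ (mapsTo_texch p hx).1

lemma sub_sum_mem_Ioc {p q : List ℕ} {x : ℤ} (hx : x ∈ Ioc (p.sum : ℤ) (p ++ q).sum) :
    x - p.sum ∈ Ioc 0 (q.sum : ℤ) := by
  simp only [List.sum_append, mem_Ioc] at hx ⊢
  omega

lemma texch_append_right {p q : List ℕ} {x : ℤ} (hx : x ∈ Ioc (p.sum : ℤ) (p ++ q).sum) :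
    Texch (p ++ q) x = Texch q (x - p.sum) := by
  obtain ⟨i, hi, hxi⟩ := exists_mem_block (sub_sum_mem_Ioc hx)
  have hxi' : x ∈ block (p ++ q) (p.length + i) := by
    simpa only [add_sub_cancel] using add_mem_block_append p hxi
  rw [texch_of_mem_block (by simpa using hi) hxi', texch_of_mem_block hi hxi,
    transParam_append_length_add]
  ring

lemma texch_append_le_sum {p q : List ℕ} {x : ℤ} (hx : x ∈ Ioc (p.sum : ℤ) (p ++ q).sum) :
    Texch (p ++ q) x ≤ q.sum := by
  rw [texch_append_right hx]
  exact (mapsTo_texch q (sub_sum_mem_Ioc hx)).2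

lemma texch_append_cons_of_mem_Ioc {p : List ℕ} {d : ℕ} {x : ℤ}
    (hx : x ∈ Ioc (p.sum : ℤ) (p.sum + d)) (q : List ℕ) :
    Texch (p ++ d :: q) x = x + (q.sum - p.sum) := by
  rw [← block_append_cons p d q] at hx
  rw [texch_of_mem_block (by simp) hx, transParam_append_cons]

lemma orbitsSet_eq_image (l : List ℕ) :
    orbitsSet l = forwardOrbit (Texch l) '' Ioc 0 (l.sum : ℤ) := by
  ext S
  simp only [orbitsSet, mem_ofPred_eq, mem_image, mem_Ioc, and_assoc, Int.add_one_le_iff.symm,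
    zero_add, eq_comm (a := S)]
  rfl

end Exchange

section Insertion

/-- The increasing bijection from `ℤ` onto the complement of `Ioc a (a + d)`, for `0 ≤ d`. -/
def openGap (a d y : ℤ) : ℤ := if y ≤ a then y else y + d

lemma openGap_of_le {a y : ℤ} (h : y ≤ a) (d : ℤ) : openGap a d y = y := if_pos h

lemma openGap_of_lt {a y : ℤ} (h : a < y) (d : ℤ) : openGap a d y = y + d := if_neg h.not_ge

lemma strictMono_openGap (a : ℤ) {d : ℤ} (hd : 0 ≤ d) : StrictMono (openGap a d) := by
  intro y z hyz
  unfold openGap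
  split_ifs <;> omega

lemma range_openGap (a d : ℤ) : range (openGap a d) = (Ioc a (a + d))ᶜ := by
  ext x
  simp only [mem_range, mem_compl_iff, mem_Ioc]
  constructor
  · rintro ⟨y, rfl⟩
    unfold openGap
    split_ifs <;> omega
  · intro hx
    rcases le_or_gt x a with hxa | hxa
    · exact ⟨x, openGap_of_le hxa d⟩
    · exact ⟨x - d, by rw [openGap_of_lt (by omega), sub_add_cancel]⟩

lemma openGap_mem_Ioc_iff {a d n y : ℤ} (ha : 0 ≤ a) (han : a ≤ n) (hd : 0 ≤ d) :
    openGap a d y ∈ Ioc 0 (n + d) ↔ y ∈ Ioc 0 n := by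
  simp only [openGap, mem_Ioc]
  split_ifs <;> omega

variable {p q : List ℕ} {d : ℕ}

lemma cast_sum_append_cons : ((p ++ d :: q).sum : ℤ) = (p ++ q).sum + d := by
  rw [List.sum_append, List.sum_cons, List.sum_append]
  omega

lemma openGap_mem_Ioc_sum_iff {y : ℤ} :
    openGap p.sum d y ∈ Ioc 0 ((p ++ d :: q).sum : ℤ) ↔ y ∈ Ioc 0 ((p ++ q).sum : ℤ) := by
  rw [cast_sum_append_cons]
  exact openGap_mem_Ioc_iff (Int.natCast_nonneg _) (by simp [-Nat.cast_list_sum])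
    (Int.natCast_nonneg _)

lemma texch_openGap_of_notMem_Ioc {y : ℤ} (hy : y ∉ Ioc 0 ((p ++ q).sum : ℤ)) :
    Texch (p ++ d :: q) (openGap p.sum d y) = openGap p.sum d (Texch (p ++ q) y) := by
  rw [texch_of_notMem_Ioc hy, texch_of_notMem_Ioc (mt openGap_mem_Ioc_sum_iff.1 hy)]

lemma texch_openGap_of_mem_left {y : ℤ} (hy : y ∈ Ioc 0 (p.sum : ℤ)) :
    Texch (p ++ d :: q) (openGap p.sum d y) = Texch (p ++ q) y + d := by
  rw [openGap_of_le hy.2, texch_append_left hy, texch_append_left hy, List.sum_cons]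
  push_cast [-Nat.cast_list_sum]
  ring

lemma texch_openGap_of_mem_right {y : ℤ} (hy : y ∈ Ioc (p.sum : ℤ) (p ++ q).sum) :
    Texch (p ++ d :: q) (openGap p.sum d y) = Texch (p ++ q) y := by
  have hsum : ((p ++ [d]).sum : ℤ) = p.sum + d := by simp [-Nat.cast_list_sum]
  have hyd : y + d ∈ Ioc ((p ++ [d]).sum : ℤ) (p ++ [d] ++ q).sum := by
    rw [hsum, ← List.append_cons, cast_sum_append_cons]
    exact ⟨add_lt_add_left hy.1 _, add_le_add_left hy.2 _⟩
  rw [openGap_of_lt hy.1, List.append_cons, texch_append_right hyd, texch_append_right hy, hsum,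
    add_sub_add_right_eq_sub]

/-- A point sent into the gap is off by `d` from its image under the shorter exchange; the inserted
block, whose translation parameter is `± d` with the right sign, corrects this in one more step. -/
lemma isFirstReturnMap_texch (hd : d = ((q.sum : ℤ) - p.sum).natAbs) :
    IsFirstReturnMap (Texch (p ++ d :: q)) (openGap p.sum d) (Texch (p ++ q)) := by
  refine .of_return_time_le_two fun y => ?_
  rw [range_openGap, notMem_compl_iff]
  by_cases hy : y ∈ Ioc 0 ((p ++ q).sum : ℤ)
  swap
  · exact .inl (texch_openGap_of_notMem_Ioc hy)
  rcases le_or_gt y p.sum with hle | hlt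
  · have hleft : y ∈ Ioc 0 (p.sum : ℤ) := ⟨hy.1, hle⟩
    have hlow := sum_lt_texch_append hleft q
    rw [texch_openGap_of_mem_left hleft]
    rcases le_or_gt (Texch (p ++ q) y) p.sum with hTle | hTlt
    · have hgap : Texch (p ++ q) y + d ∈ Ioc (p.sum : ℤ) (p.sum + d) := ⟨by omega, by omega⟩
      refine .inr ⟨hgap, ?_⟩
      rw [texch_append_cons_of_mem_Ioc hgap, openGap_of_le hTle]
      omega
    · exact .inl (openGap_of_lt hTlt d).symm
  · have hright : y ∈ Ioc (p.sum : ℤ) (p ++ q).sum := ⟨hlt, hy.2⟩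
    have hhigh := texch_append_le_sum hright
    rw [texch_openGap_of_mem_right hright]
    rcases le_or_gt (Texch (p ++ q) y) p.sum with hTle | hTlt
    · exact .inl (openGap_of_le hTle d).symm
    · have hgap : Texch (p ++ q) y ∈ Ioc (p.sum : ℤ) (p.sum + d) := ⟨hTlt, by omega⟩
      refine .inr ⟨hgap, ?_⟩
      rw [texch_append_cons_of_mem_Ioc hgap, openGap_of_lt hTlt]
      omega

lemma texch_notMem_Ioc_of_mem_Ioc (hd : d = ((q.sum : ℤ) - p.sum).natAbs) {x : ℤ}
    (hx : x ∈ Ioc (p.sum : ℤ) (p.sum + d)) :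
    Texch (p ++ d :: q) x ∉ Ioc (p.sum : ℤ) (p.sum + d) := by
  rw [texch_append_cons_of_mem_Ioc hx]
  simp only [mem_Ioc] at hx ⊢
  omega

lemma exists_openGap_mem_forwardOrbit (hd : d = ((q.sum : ℤ) - p.sum).natAbs) {x : ℤ}
    (hx : x ∈ Ioc 0 ((p ++ d :: q).sum : ℤ)) :
    ∃ y ∈ Ioc 0 ((p ++ q).sum : ℤ),
      openGap p.sum d y ∈ forwardOrbit (Texch (p ++ d :: q)) x := by
  obtain ⟨w, hw, hwx, hgap⟩ : ∃ w ∈ Ioc 0 ((p ++ d :: q).sum : ℤ),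
      w ∈ forwardOrbit (Texch (p ++ d :: q)) x ∧ w ∉ Ioc (p.sum : ℤ) (p.sum + d) := by
    by_cases hxgap : x ∈ Ioc (p.sum : ℤ) (p.sum + d)
    · exact ⟨_, mapsTo_texch _ hx, ⟨1, rfl⟩, texch_notMem_Ioc_of_mem_Ioc hd hxgap⟩
    · exact ⟨x, hx, self_mem_forwardOrbit _ x, hxgap⟩
  rw [← mem_compl_iff, ← range_openGap] at hgap
  obtain ⟨y, rfl⟩ := hgap
  exact ⟨y, openGap_mem_Ioc_sum_iff.1 hw, hwx⟩

theorem numOrbits_append_cons (hd : d = ((q.sum : ℤ) - p.sum).natAbs) :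
    numOrbits (p ++ d :: q) = numOrbits (p ++ q) := by
  rw [numOrbits, numOrbits, orbitsSet_eq_image, orbitsSet_eq_image]
  exact (isFirstReturnMap_texch hd).ncard_image_forwardOrbit
    (strictMono_openGap _ (Int.natCast_nonneg d)).injective (fun _ => openGap_mem_Ioc_sum_iff.2)
    (Ioc_subset_periodicPts_texch _) fun _ => exists_openGap_mem_forwardOrbit hd

lemma insertIdx_append_length {α : Type*} (p q : List α) (x : α) :
    (p ++ q).insertIdx p.length x = p ++ x :: q :=
  List.modifyTailIdx_add (List.cons x) 0 p q

lemma deltaParam_append_length (p q : List ℕ) :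
    deltaParam (p ++ q) p.length = q.sum - p.sum := by
  rw [deltaParam, List.take_left, List.sum_append]
  omega

end Insertion

/-- if `δ_t ≠ 0`, inserting the part `|δ_t|` after position `t`
preserves the number of orbits; moreover the `(t+1)`-th translation parameter of the new
composition equals `δ_t`. -/
theorem numOrbits_insertIdx_deltaParam (l : List ℕ) (hl : IsComposition l)
    (t : ℕ) (ht : t ≤ l.length) (hδ : deltaParam l t ≠ 0) :
    numOrbits (l.insertIdx t (deltaParam l t).natAbs) = numOrbits l ∧
      transParam (l.insertIdx t (deltaParam l t).natAbs) t = deltaParam l t := by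
  obtain ⟨p, q, rfl, rfl⟩ : ∃ p q : List ℕ, p ++ q = l ∧ p.length = t :=
    ⟨l.take t, l.drop t, l.take_append_drop t, List.length_take_of_le ht⟩
  rw [insertIdx_append_length, deltaParam_append_length]
  exact ⟨numOrbits_append_cons rfl, transParam_append_cons p _ q⟩
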